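/- arXiv:math/0605405 — 5 statements merged into one kernel-verified Lean document; each statement's English description precedes it below -/
import Mathlib

section
/- Let n, k, m be natural numbers with n = k + m. Let f₁ : (Fin n → ℝ) × (Fin m → ℝ) → (Fin k → ℝ) and f₂ : (Fin n → ℝ) × (Fin m → ℝ) → (Fin m → ℝ) be C^∞ maps, and let (x₀, u₀) be a point such that the partial Fréchet derivative at u₀ of the map u ↦ f₂ (x₀, u) is a linear isomorphism of (Fin m → ℝ). Then there exist an open neighborhood W of (x₀, u₀), an open neighborhood Ω of (x₀, (f₁ (x₀,u₀), f₂ (x₀,u₀))) in (Fin n → ℝ) × ((Fin k → ℝ) × (Fin m → ℝ)), and a C^∞ map F : (Fin n → ℝ) × ((Fin k → ℝ) × (Fin m → ℝ)) → (Fin k → ℝ) such that: (i) for every (x,u) ∈ W the point (x, (f₁(x,u), f₂(x,u))) lies in Ω and F(x, (f₁(x,u), f₂(x,u))) = 0; (ii) for every (x,v) ∈ Ω the partial Fréchet derivative of F with respect to the second variable v at (x,v) is surjective; (iii) for every (x,v) ∈ Ω with F(x,v) = 0 there exists u with (x,u) ∈ W and v = (f₁(x,u), f₂(x,u)). -/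
/-!
The map `Φ (x, u) = (x, f₂ (x, u))` has invertible derivative at `(x₀, u₀)`, so by the inverse
function theorem it is a local diffeomorphism there. Writing `Φ⁻¹` for its local inverse, the
velocity `(a, b)` is attained at `x` (near the base point) exactly when `a = f₁ (Φ⁻¹ (x, b))`.
Multiplying `f₁ ∘ Φ⁻¹` by a bump function equal to `1` near `Φ (x₀, u₀)` gives a globally smooth
`H`, and `F (x, (a, b)) = a - H (x, b)` is the required implicit equation: its derivative in the
direction `(c, 0)` is `c`, hence its partial derivative in the velocity is surjective everywhere.
-/

/-- The local inverse given by the inverse function theorem is smooth on a full neighbourhood of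
the image point. (`ContDiffAt ℝ ∞` at a single point would not suffice, since the neighbourhood
may then shrink with the order of differentiability.) -/
lemma exists_local_diffeo {E : Type*} [NormedAddCommGroup E] [NormedSpace ℝ E] [CompleteSpace E]
    {Φ : E → E} (hΦ : ContDiff ℝ (⊤ : ℕ∞) Φ) {p₀ : E} (A : E ≃L[ℝ] E)
    (hA : fderiv ℝ Φ p₀ = (A : E →L[ℝ] E)) :
    ∃ (e : OpenPartialHomeomorph E E) (V : Set E), (e : E → E) = Φ ∧ p₀ ∈ e.source ∧ IsOpen V ∧
      Φ p₀ ∈ V ∧ V ⊆ e.target ∧ ∀ y ∈ V, ContDiffAt ℝ (⊤ : ℕ∞) e.symm y := by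
  have hne : ((⊤ : ℕ∞) : WithTop ℕ∞) ≠ 0 := by simp
  have hd : ∀ p, HasFDerivAt Φ (fderiv ℝ Φ p) p := fun p =>
    (hΦ.differentiable hne p).hasFDerivAt
  have hA' : HasFDerivAt Φ (A : E →L[ℝ] E) p₀ := hA ▸ hd p₀
  let e := (hΦ.contDiffAt (x := p₀)).toOpenPartialHomeomorph Φ hA' hne
  have he : (e : E → E) = Φ := rfl
  have hp : p₀ ∈ e.source := (hΦ.contDiffAt (x := p₀)).mem_toOpenPartialHomeomorph_source hA' hne
  -- The points at which the derivative of `Φ` is invertible form an open set.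
  let S : Set E := fderiv ℝ Φ ⁻¹' Set.range ((↑) : (E ≃L[ℝ] E) → E →L[ℝ] E)
  have hS : IsOpen S := ContinuousLinearEquiv.isOpen.preimage (hΦ.continuous_fderiv hne)
  refine ⟨e, e.target ∩ e.symm ⁻¹' S, he, hp, e.isOpen_inter_preimage_symm hS, ?_,
    Set.inter_subset_left, ?_⟩
  · refine ⟨e.map_source hp, ?_⟩
    change e.symm (e p₀) ∈ S
    rw [e.left_inv hp]
    exact ⟨A, hA.symm⟩
  · rintro y ⟨hy, B, hB⟩
    refine e.contDiffAt_symm hy (f₀' := B) ?_ hΦ.contDiffAt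
    rw [hB]
    exact hd _

/-- A function smooth on an open set `V` agrees near any point of `V` with a globally smooth
function. -/
lemma exists_smooth_extension {E G : Type*} [NormedAddCommGroup E] [NormedSpace ℝ E]
    [FiniteDimensional ℝ E] [NormedAddCommGroup G] [NormedSpace ℝ G]
    {g : E → G} {V : Set E} (hV : IsOpen V) {y₀ : E} (hy : y₀ ∈ V)
    (hg : ∀ y ∈ V, ContDiffAt ℝ (⊤ : ℕ∞) g y) :
    ∃ (H : E → G) (U : Set E), ContDiff ℝ (⊤ : ℕ∞) H ∧ IsOpen U ∧ y₀ ∈ U ∧ U ⊆ V ∧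
      ∀ y ∈ U, H y = g y := by
  obtain ⟨ε, hε, hεV⟩ := Metric.isOpen_iff.1 hV y₀ hy
  let φ : ContDiffBump y₀ := ⟨ε / 4, ε / 2, by positivity, by linarith⟩
  have hsub : tsupport φ ⊆ V := by
    rw [φ.tsupport_eq]
    exact (Metric.closedBall_subset_ball (by change ε / 2 < ε; linarith)).trans hεV
  refine ⟨fun y => φ y • g y, Metric.ball y₀ (ε / 4), ?_, Metric.isOpen_ball,
    Metric.mem_ball_self (by positivity),
    (Metric.ball_subset_ball (by linarith)).trans hεV, ?_⟩
  · rw [contDiff_iff_contDiffAt]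
    intro y
    by_cases hyV : y ∈ V
    · exact φ.contDiff.contDiffAt.smul (hg y hyV)
    · have h0 : φ =ᶠ[nhds y] 0 := notMem_tsupport_iff_eventuallyEq.1 fun h => hyV (hsub h)
      refine (contDiffAt_const (c := (0 : G))).congr_of_eventuallyEq ?_
      filter_upwards [h0] with z hz
      simp [hz]
  · intro y hyU
    have : φ y = 1 := φ.one_of_mem_closedBall (Metric.ball_subset_closedBall hyU)
    simp [this]

/-- Remark 1.1 (forward direction): an explicit control system `ẋ = f(x,u)` with
`rank ∂f/∂u = m` (after permutation, the last `m` components `f₂` have invertible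
Jacobian with respect to `u`) admits a locally equivalent implicit representation
`F(x, ẋ) = 0` with surjective (rank `n - m = k`) partial derivative with respect to
the velocity variable. -/
theorem stmt0 (n k m : ℕ) (hn : n = k + m)
    (f₁ : (Fin n → ℝ) × (Fin m → ℝ) → (Fin k → ℝ))
    (f₂ : (Fin n → ℝ) × (Fin m → ℝ) → (Fin m → ℝ))
    (hf₁ : ContDiff ℝ (⊤ : ℕ∞) f₁) (hf₂ : ContDiff ℝ (⊤ : ℕ∞) f₂)
    (x₀ : Fin n → ℝ) (u₀ : Fin m → ℝ)
    (hiso : ∃ e : (Fin m → ℝ) ≃L[ℝ] (Fin m → ℝ),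
      fderiv ℝ (fun u => f₂ (x₀, u)) u₀ = (e : (Fin m → ℝ) →L[ℝ] (Fin m → ℝ))) :
    ∃ (W : Set ((Fin n → ℝ) × (Fin m → ℝ)))
      (Ω : Set ((Fin n → ℝ) × ((Fin k → ℝ) × (Fin m → ℝ))))
      (F : (Fin n → ℝ) × ((Fin k → ℝ) × (Fin m → ℝ)) → (Fin k → ℝ)),
      IsOpen W ∧ (x₀, u₀) ∈ W ∧ IsOpen Ω ∧
      (x₀, (f₁ (x₀, u₀), f₂ (x₀, u₀))) ∈ Ω ∧
      ContDiff ℝ (⊤ : ℕ∞) F ∧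
      (∀ p ∈ W, (p.1, (f₁ p, f₂ p)) ∈ Ω ∧ F (p.1, (f₁ p, f₂ p)) = 0) ∧
      (∀ q ∈ Ω, Function.Surjective (fderiv ℝ (fun v => F (q.1, v)) q.2)) ∧
      (∀ q ∈ Ω, F q = 0 → ∃ u : Fin m → ℝ, (q.1, u) ∈ W ∧ q.2 = (f₁ (q.1, u), f₂ (q.1, u))) := by
  obtain ⟨e₀, he₀⟩ := hiso
  have hne : ((⊤ : ℕ∞) : WithTop ℕ∞) ≠ 0 := by simp
  let Φ : (Fin n → ℝ) × (Fin m → ℝ) → (Fin n → ℝ) × (Fin m → ℝ) := fun p => (p.1, f₂ p)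
  have hΦ : ContDiff ℝ (⊤ : ℕ∞) Φ := contDiff_fst.prodMk hf₂
  have hdf : HasFDerivAt f₂ (fderiv ℝ f₂ (x₀, u₀)) (x₀, u₀) :=
    (hf₂.differentiable hne _).hasFDerivAt
  have hdΦ : fderiv ℝ Φ (x₀, u₀) =
      (ContinuousLinearMap.fst ℝ _ _).prod (fderiv ℝ f₂ (x₀, u₀)) :=
    (hasFDerivAt_fst.prodMk hdf).fderiv
  have hpart : ∀ du, fderiv ℝ f₂ (x₀, u₀) (0, du) = e₀ du := by
    intro du
    have h := (hdf.comp u₀ (hasFDerivAt_prodMk_right x₀ u₀)).fderiv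
    have h2 : fderiv ℝ (fun u => f₂ (x₀, u)) u₀ du = fderiv ℝ f₂ (x₀, u₀) (0, du) := by
      change fderiv ℝ (f₂ ∘ fun u => (x₀, u)) u₀ du = _
      rw [h]
      simp
    rw [← h2, he₀]
    rfl
  have hinj : Function.Injective (fderiv ℝ Φ (x₀, u₀)) := by
    rw [injective_iff_map_eq_zero]
    rintro ⟨dx, du⟩ h
    rw [hdΦ] at h
    have h1 : dx = 0 := congrArg Prod.fst h
    have h2 : fderiv ℝ f₂ (x₀, u₀) (dx, du) = 0 := congrArg Prod.snd h
    subst h1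
    rw [hpart] at h2
    have h3 : du = 0 := by simpa using h2
    rw [h3]
    rfl
  let A := (LinearEquiv.ofInjectiveEndo
    (fderiv ℝ Φ (x₀, u₀)).toLinearMap hinj).toContinuousLinearEquiv
  have hA : fderiv ℝ Φ (x₀, u₀) = (A : _ →L[ℝ] _) := by ext1 <;> rfl
  obtain ⟨e, V, he, hp, hVo, hV, hVt, hsm⟩ := exists_local_diffeo hΦ A hA
  obtain ⟨H, U, hH, hUo, hU, hUV, hHU⟩ := exists_smooth_extension (g := fun y => f₁ (e.symm y))
    hVo hV fun y hy => hf₁.contDiffAt.comp y (hsm y hy)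
  have hF : ContDiff ℝ (⊤ : ℕ∞)
      fun q : (Fin n → ℝ) × ((Fin k → ℝ) × (Fin m → ℝ)) => q.2.1 - H (q.1, q.2.2) := by
    fun_prop
  refine ⟨e.source ∩ Φ ⁻¹' U, {q | (q.1, q.2.2) ∈ U}, fun q => q.2.1 - H (q.1, q.2.2),
    e.open_source.inter (hUo.preimage hΦ.continuous), ⟨hp, hU⟩,
    hUo.preimage (by fun_prop), hU, hF, ?_, ?_, ?_⟩
  · rintro p ⟨hps, hpU⟩
    refine ⟨hpU, ?_⟩
    have h1 : H (p.1, f₂ p) = f₁ (e.symm (Φ p)) := hHU _ hpU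
    have h2 : e.symm (Φ p) = p := by
      rw [← he]
      exact e.left_inv hps
    simp [h1, h2]
  · rintro ⟨x, a, b⟩ - c
    refine ⟨(c, 0), ?_⟩
    have hHd : DifferentiableAt ℝ H (x, b) := hH.differentiable hne _
    have hd : HasFDerivAt (fun v : (Fin k → ℝ) × (Fin m → ℝ) => v.1 - H (x, v.2)) _ (a, b) :=
      hasFDerivAt_fst.sub (hHd.hasFDerivAt.comp (a, b)
        ((hasFDerivAt_prodMk_right x b).comp (a, b) hasFDerivAt_snd))
    change fderiv ℝ (fun v : (Fin k → ℝ) × (Fin m → ℝ) => v.1 - H (x, v.2)) (a, b) (c, 0) = c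
    rw [hd.fderiv]
    simp only [sub_apply, ContinuousLinearMap.comp_apply, ContinuousLinearMap.coe_fst',
      ContinuousLinearMap.coe_snd', map_zero, sub_zero]
  · rintro ⟨x, a, b⟩ hq h0
    have hq' : (x, b) ∈ U := hq
    have ht : (x, b) ∈ e.target := hVt (hUV hq')
    have h1 : Φ (e.symm (x, b)) = (x, b) := by
      rw [← he]
      exact e.right_inv ht
    have hx : (e.symm (x, b)).1 = x := congrArg Prod.fst h1
    have hb : f₂ (e.symm (x, b)) = b := congrArg Prod.snd h1
    have ha : a = f₁ (e.symm (x, b)) := (sub_eq_zero.1 h0).trans (hHU _ hq')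
    have hpair : (x, (e.symm (x, b)).2) = e.symm (x, b) := Prod.ext hx.symm rfl
    refine ⟨(e.symm (x, b)).2, ?_, ?_⟩
    · change (x, (e.symm (x, b)).2) ∈ _
      rw [hpair]
      exact ⟨e.map_target ht, by rw [Set.mem_preimage, h1]; exact hq'⟩
    · change (a, b) = (f₁ (x, (e.symm (x, b)).2), f₂ (x, (e.symm (x, b)).2))
      rw [hpair, hb, ← ha]
end

section
/- Let ω ∈ V_1. The following are equivalent: (a) there exists an invertible degree-0 operator M on (V, d) (each M_p a linear automorphism of V_p) such that d_1(M_1 ω) = 0; (b) there exist a degree-1 operator μ and an invertible degree-0 operator M on (V, d) such that d_1 ω = μ_1 ω, 𝔡μ = μ ∘ μ (i.e. (𝔡μ)_p = μ_{p+1} ∘ μ_p for all p), and 𝔡M = −M ∘ μ (i.e. (𝔡M)_p = −M_{p+1} ∘ μ_p for all p). -/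
/-!
The equation `𝔡M = -M μ` determines `μ` from `M`: it says `μ = d - N`, where `N = M⁻¹ d M` is the
conjugated differential. For this `μ`, `dω = μω` means `N ω = 0`, that is `d (M ω) = 0`, while
`𝔡μ = μ ∘ μ` reduces to `d² = N²` and so holds automatically, as `d² = 0` and
`N² = M⁻¹ d² M = 0`.
-/

/-- The algebraic content of the paper's moving-frame characterization of strong
closedness (flatness): for `ω ∈ V_1`, there is an invertible degree-`0` operator `M`
with `d(M ω) = 0` iff there are a degree-`1` operator `μ` and an invertible degree-`0`
operator `M` with `dω = μω`, `𝔡μ = μ ∘ μ` and `𝔡M = −M ∘ μ` (where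
`(𝔡M)_p = d_p ∘ M_p − M_{p+1} ∘ d_p` and `(𝔡μ)_p = d_{p+1} ∘ μ_p + μ_{p+1} ∘ d_p`). -/
theorem stmt9 {R : Type*} [CommRing R] (V : ℤ → Type*) [∀ p, AddCommGroup (V p)]
    [∀ p, Module R (V p)] (d : ∀ p, V p →ₗ[R] V (p + 1))
    (hd : ∀ (p : ℤ) (x : V p), d (p + 1) (d p x) = 0)
    (ω : V 1) :
    (∃ M : ∀ p, V p ≃ₗ[R] V p, d 1 (M 1 ω) = 0) ↔
    (∃ (μ : ∀ p, V p →ₗ[R] V (p + 1)) (M : ∀ p, V p ≃ₗ[R] V p),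
      d 1 ω = μ 1 ω ∧
      (∀ p, d (p + 1) ∘ₗ μ p + μ (p + 1) ∘ₗ d p = μ (p + 1) ∘ₗ μ p) ∧
      (∀ p, d p ∘ₗ (M p).toLinearMap - (M (p + 1)).toLinearMap ∘ₗ d p
          = -((M (p + 1)).toLinearMap ∘ₗ μ p))) := by
  constructor
  · rintro ⟨M, hM⟩
    -- The third structure equation forces `μ = d - M⁻¹ d M`.
    refine ⟨fun p => d p - (M (p + 1)).symm.toLinearMap ∘ₗ d p ∘ₗ (M p).toLinearMap, M,
      ?_, fun p => ?_, fun p => ?_⟩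
    · simp [hM]
    · -- Since `d² = 0` and `(M⁻¹ d M)² = 0`, both sides equal `-(d M⁻¹ d M + M⁻¹ d M d)`.
      ext x
      simp [hd]
      abel
    · ext x
      simp
  · rintro ⟨μ, M, h₁, -, h₃⟩
    -- Evaluating `𝔡M = -M μ` at `ω` gives `d (M ω) = M (d ω) - M (μ ω) = 0`.
    refine ⟨M, ?_⟩
    have h := LinearMap.congr_fun (h₃ 1) ω
    simpa [← h₁] using h
end

section
/- Let ω ∈ V_1 and let M be an invertible degree-0 operator on (V, d). Define the degree-1 operator μ := −M⁻¹ ∘ 𝔡M and the element ϖ := (M_2)⁻¹ (d_1(M_1 ω)) ∈ V_2. Then: (i) d_1 ω = μ_1 ω + ϖ; (ii) d_2 ϖ = μ_2 ϖ; (iii) 𝔡μ = μ ∘ μ, i.e. (𝔡μ)_p = μ_{p+1} ∘ μ_p for all p. -/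
/-- The paper's theorem on non-flat systems (Remark 4.1): for `ω ∈ V_1` and an
invertible degree-`0` operator `M`, with `μ := −M⁻¹ ∘ 𝔡M` (where
`(𝔡M)_p = d_p ∘ M_p − M_{p+1} ∘ d_p`) and `ϖ := M_2⁻¹ (d_1 (M_1 ω)) ∈ V_2`
(the index `2 = 1 + 1`), one has (i) `dω = μω + ϖ`, (ii) `dϖ = μϖ`,
(iii) `𝔡μ = μ ∘ μ`. -/
theorem stmt10 {R : Type*} [CommRing R] (V : ℤ → Type*) [∀ p, AddCommGroup (V p)]
    [∀ p, Module R (V p)] (d : ∀ p, V p →ₗ[R] V (p + 1))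
    (hd : ∀ (p : ℤ) (x : V p), d (p + 1) (d p x) = 0)
    (ω : V 1) (M : ∀ p, V p ≃ₗ[R] V p)
    (μ : ∀ p, V p →ₗ[R] V (p + 1))
    (hμ : ∀ p, μ p = -((M (p + 1)).symm.toLinearMap ∘ₗ
        (d p ∘ₗ (M p).toLinearMap - (M (p + 1)).toLinearMap ∘ₗ d p)))
    (ϖ : V (1 + 1))
    (hϖ : ϖ = (M (1 + 1)).symm (d 1 (M 1 ω))) :
    d 1 ω = μ 1 ω + ϖ ∧
    d (1 + 1) ϖ = μ (1 + 1) ϖ ∧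
    (∀ p, d (p + 1) ∘ₗ μ p + μ (p + 1) ∘ₗ d p = μ (p + 1) ∘ₗ μ p) := by
  -- `μ = d - M⁻¹ d M` is the difference of two differentials, `d` and its conjugate by `M`;
  -- all three claims follow from this together with `d² = 0`.
  have key : ∀ (p : ℤ) (x : V p), μ p x = d p x - (M (p + 1)).symm (d p (M p x)) := by
    intro p x
    simp [hμ]
  refine ⟨?_, ?_, fun p => ?_⟩
  · rw [key, hϖ, sub_add_cancel]
  · rw [key, hϖ, LinearEquiv.apply_symm_apply, hd, map_zero, sub_zero]
  · ext x
    simp only [LinearMap.add_apply, LinearMap.comp_apply, key, map_sub,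
      LinearEquiv.apply_symm_apply, hd, map_zero]
    abel
end

section
/- Let x, y, θ : ℝ → ℝ be functions differentiable at a point t₀ ∈ ℝ such that deriv x t₀ · sin (θ t₀) = deriv y t₀ · cos (θ t₀), cos (θ t₀) ≠ 0, and deriv θ t₀ ≠ 0. Define y₁ : ℝ → ℝ by y₁ t = y t − x t · tan (θ t). Then x t₀ = −(deriv y₁ t₀ / deriv θ t₀) · (cos (θ t₀))² and y t₀ = y₁ t₀ − (deriv y₁ t₀ / deriv θ t₀) · sin (θ t₀) · cos (θ t₀). -/
/-- Verification that `(y₁, y₂) = (y − x tan θ, θ)` is a flat output of the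
nonholonomic car `ẋ sin θ = ẏ cos θ`: the state variables are recovered by
`x = −(ẏ₁/θ̇) cos² θ` and `y = y₁ − (ẏ₁/θ̇) sin θ cos θ`. -/
theorem stmt18 (x y θ : ℝ → ℝ) (t₀ : ℝ)
    (hx : DifferentiableAt ℝ x t₀) (hy : DifferentiableAt ℝ y t₀)
    (hθ : DifferentiableAt ℝ θ t₀)
    (hcon : deriv x t₀ * Real.sin (θ t₀) = deriv y t₀ * Real.cos (θ t₀))
    (hcos : Real.cos (θ t₀) ≠ 0) (hθ' : deriv θ t₀ ≠ 0)
    (y₁ : ℝ → ℝ) (hy₁ : ∀ t, y₁ t = y t - x t * Real.tan (θ t)) :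
    x t₀ = -(deriv y₁ t₀ / deriv θ t₀) * (Real.cos (θ t₀)) ^ 2 ∧
    y t₀ = y₁ t₀ - (deriv y₁ t₀ / deriv θ t₀) * Real.sin (θ t₀) * Real.cos (θ t₀) := by
  -- The constraint says `ẏ = ẋ tan θ`, so in `ẏ₁ = ẏ - ẋ tan θ - x θ̇ / cos² θ` only the last
  -- term survives.
  have hvel : deriv y t₀ = deriv x t₀ * Real.tan (θ t₀) := by
    rw [Real.tan_eq_sin_div_cos, ← mul_div_assoc, eq_div_iff hcos, hcon]
  have htan : HasDerivAt (fun t => Real.tan (θ t))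
      (1 / Real.cos (θ t₀) ^ 2 * deriv θ t₀) t₀ :=
    (Real.hasDerivAt_tan hcos).comp t₀ hθ.hasDerivAt
  have hderiv : deriv y₁ t₀ = -(x t₀ * (1 / Real.cos (θ t₀) ^ 2 * deriv θ t₀)) := by
    rw [funext hy₁]
    refine (hy.hasDerivAt.fun_sub (hx.hasDerivAt.fun_mul htan)).deriv.trans ?_
    rw [hvel]
    ring
  constructor
  · rw [hderiv]
    field_simp
  · rw [hderiv, hy₁, Real.tan_eq_sin_div_cos]
    field_simp
    ring
end

section
/- Let a ∈ ℝ and let x, z, θ : ℝ → ℝ be C² functions (ContDiff ℝ 2). Let t₀ ∈ ℝ and suppose the pendulum equation a · deriv (deriv θ) t₀ + deriv (deriv x) t₀ · cos (θ t₀) − (deriv (deriv z) t₀ + 1) · sin (θ t₀) = 0 holds at t₀. Define y₁, y₂ : ℝ → ℝ by y₁ t = z t + a · cos (θ t) and y₂ t = x t + a · sin (θ t). Then deriv (deriv y₂) t₀ · cos (θ t₀) − (deriv (deriv y₁) t₀ + 1) · sin (θ t₀) = 0. -/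
/-!
Differentiating twice gives `ÿ₁ = z̈ - a (θ̇² cos θ + θ̈ sin θ)` and
`ÿ₂ = ẍ + a (θ̈ cos θ - θ̇² sin θ)`. In `ÿ₂ cos θ - (ÿ₁ + 1) sin θ` the `θ̇²` terms cancel and
`sin² θ + cos² θ = 1` turns the rest into the left-hand side of the pendulum equation.
-/

/-- Key identity of the pendulum example: along a solution of the implicit pendulum
model `a θ̈ + ẍ cos θ − (z̈ + 1) sin θ = 0`, the Huygens oscillation center
`y₁ = z + a cos θ`, `y₂ = x + a sin θ` satisfies `ÿ₂ cos θ − (ÿ₁ + 1) sin θ = 0`. -/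
theorem stmt19 (a : ℝ) (x z θ : ℝ → ℝ)
    (hx : ContDiff ℝ 2 x) (hz : ContDiff ℝ 2 z) (hθ : ContDiff ℝ 2 θ)
    (t₀ : ℝ)
    (heq : a * deriv (deriv θ) t₀ + deriv (deriv x) t₀ * Real.cos (θ t₀)
        - (deriv (deriv z) t₀ + 1) * Real.sin (θ t₀) = 0)
    (y₁ y₂ : ℝ → ℝ)
    (hy₁ : ∀ t, y₁ t = z t + a * Real.cos (θ t))
    (hy₂ : ∀ t, y₂ t = x t + a * Real.sin (θ t)) :
    deriv (deriv y₂) t₀ * Real.cos (θ t₀)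
      - (deriv (deriv y₁) t₀ + 1) * Real.sin (θ t₀) = 0 := by
  have first : ∀ f : ℝ → ℝ, ContDiff ℝ 2 f → ∀ t, HasDerivAt f (deriv f t) t :=
    fun f hf t => (hf.differentiable (by norm_num) t).hasDerivAt
  have second : ∀ f : ℝ → ℝ, ContDiff ℝ 2 f →
      HasDerivAt (deriv f) (deriv (deriv f) t₀) t₀ :=
    fun f hf => (hf.differentiable_deriv_two t₀).hasDerivAt
  have d₁ : deriv y₁ = fun t => deriv z t + a * (-Real.sin (θ t) * deriv θ t) := by
    rw [funext hy₁]
    exact funext fun t => ((first z hz t).add ((first θ hθ t).cos.const_mul a)).deriv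
  have d₂ : deriv y₂ = fun t => deriv x t + a * (Real.cos (θ t) * deriv θ t) := by
    rw [funext hy₂]
    exact funext fun t => ((first x hx t).add ((first θ hθ t).sin.const_mul a)).deriv
  have dd₁ : deriv (deriv y₁) t₀ = deriv (deriv z) t₀
      + a * (-(Real.cos (θ t₀) * deriv θ t₀) * deriv θ t₀
        + -Real.sin (θ t₀) * deriv (deriv θ) t₀) := by
    rw [d₁]
    exact ((second z hz).add
      (((first θ hθ t₀).sin.neg.mul (second θ hθ)).const_mul a)).deriv
  have dd₂ : deriv (deriv y₂) t₀ = deriv (deriv x) t₀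
      + a * ((-Real.sin (θ t₀) * deriv θ t₀) * deriv θ t₀
        + Real.cos (θ t₀) * deriv (deriv θ) t₀) := by
    rw [d₂]
    exact ((second x hx).add
      (((first θ hθ t₀).cos.mul (second θ hθ)).const_mul a)).deriv
  rw [dd₁, dd₂]
  -- The `θ̇²` terms cancel and the `θ̈` terms add up to `a θ̈ (sin² θ + cos² θ)`.
  linear_combination heq + a * deriv (deriv θ) t₀ * Real.sin_sq_add_cos_sq (θ t₀)
end
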